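/- Define f : ℝ → ℝ by f(t) = 2e^{2t} − e^{4t} + 4t²e^{2t} − 1. For every t₀ > 0 there exists a constant c > 0 such that |f(t)| ≥ c·e^{4t} for all t ≥ t₀, and |f(t)| ≥ c for all t ≤ −t₀. -/

import Mathlib

/-!
Writing `sinh` through exponentials gives `f(t) = -4 e^{2t} (sinh² t - t²)`, an even function times
`e^{2t}`, so that `|f(t)| = 4 e^{2t + 2|t|} · e^{-2|t|} (sinh² |t| - |t|²)`. The prefactor
`e^{2t + 2|t|}` is `e^{4t}` for `t ≥ 0` and `1` for `t ≤ 0`, while `e^{-2s} (sinh² s - s²)` is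
positive and increasing for `s > 0`; hence its value at `t₀` serves both half-lines.
-/

open Real

lemma exp_neg_le_one_sub_add_sq_div_two {x : ℝ} (hx : 0 ≤ x) :
    exp (-x) ≤ 1 - x + x ^ 2 / 2 := by
  have hquad : 0 < 1 + x + x ^ 2 / 2 := by positivity
  calc exp (-x) = (exp x)⁻¹ := exp_neg x
    _ ≤ (1 + x + x ^ 2 / 2)⁻¹ := inv_anti₀ hquad (quadratic_le_exp_of_nonneg hx)
    _ ≤ 1 - x + x ^ 2 / 2 := by
      have hprod : (1 - x + x ^ 2 / 2) * (1 + x + x ^ 2 / 2) = 1 + x ^ 4 / 4 := by ring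
      rw [inv_le_iff_one_le_mul₀ hquad, hprod]
      exact le_add_of_nonneg_right (by positivity)

lemma two_mul_exp_mul_sinh (t : ℝ) : 2 * exp t * sinh t = exp (2 * t) - 1 := by
  have hinv : exp t * exp (-t) = 1 := by rw [← exp_add, add_neg_cancel, exp_zero]
  rw [sinh_eq, two_mul t, exp_add]
  linear_combination -hinv

lemma sq_lt_sinh_sq_iff {t : ℝ} : t ^ 2 < sinh t ^ 2 ↔ t ≠ 0 := by
  rw [sq_lt_sq, abs_sinh, self_lt_sinh_iff, abs_pos]

lemma hasDerivAt_exp_neg_mul_sinh_sq_sub_sq (t : ℝ) :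
    HasDerivAt (fun s => exp (-(2 * s)) * (sinh s ^ 2 - s ^ 2))
      (exp (-(2 * t)) * (1 - 2 * t + (2 * t) ^ 2 / 2 - exp (-(2 * t)))) t := by
  have hexp : HasDerivAt (fun s => exp (-(2 * s))) (exp (-(2 * t)) * -(2 * 1)) t :=
    ((hasDerivAt_id t).const_mul 2).neg.exp
  have hdiff : HasDerivAt (fun s => sinh s ^ 2 - s ^ 2) (2 * sinh t * cosh t - 2 * t) t := by
    simpa using ((hasDerivAt_sinh t).fun_pow 2).fun_sub (hasDerivAt_pow 2 t)
  refine (hexp.mul hdiff).congr_deriv ?_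
  have hsinh : 2 * exp (-t) * sinh t = 1 - exp (-(2 * t)) := by
    rw [← neg_inj, ← mul_neg, ← sinh_neg, two_mul_exp_mul_sinh, mul_neg, neg_sub]
  rw [← cosh_sub_sinh] at hsinh
  linear_combination exp (-(2 * t)) * hsinh

lemma monotoneOn_exp_neg_mul_sinh_sq_sub_sq :
    MonotoneOn (fun t => exp (-(2 * t)) * (sinh t ^ 2 - t ^ 2)) (Set.Ici 0) := by
  have hderiv := hasDerivAt_exp_neg_mul_sinh_sq_sub_sq
  refine monotoneOn_of_hasDerivWithinAt_nonneg (convex_Ici 0)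
    (fun t _ => (hderiv t).continuousAt.continuousWithinAt)
    (fun t _ => (hderiv t).hasDerivWithinAt) fun t ht => ?_
  rw [interior_Ici, Set.mem_Ioi] at ht
  exact mul_nonneg (exp_pos _).le
    (sub_nonneg.2 (exp_neg_le_one_sub_add_sq_div_two (by positivity)))

lemma exp_mul_le_sinh_sq_sub_sq {t₀ t : ℝ} (ht₀ : 0 ≤ t₀) (ht : t₀ ≤ |t|) :
    exp (2 * |t|) * (exp (-(2 * t₀)) * (sinh t₀ ^ 2 - t₀ ^ 2)) ≤ sinh t ^ 2 - t ^ 2 :=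
  calc exp (2 * |t|) * (exp (-(2 * t₀)) * (sinh t₀ ^ 2 - t₀ ^ 2))
      ≤ exp (2 * |t|) * (exp (-(2 * |t|)) * (sinh |t| ^ 2 - |t| ^ 2)) :=
        mul_le_mul_of_nonneg_left
          (monotoneOn_exp_neg_mul_sinh_sq_sub_sq ht₀ (ht₀.trans ht) ht) (exp_pos _).le
    _ = sinh t ^ 2 - t ^ 2 := by
        rw [← mul_assoc, ← exp_add, add_neg_cancel, exp_zero, one_mul, ← abs_sinh, sq_abs, sq_abs]

lemma determinant_expr_eq_neg_exp_mul_sinh_sq_sub_sq (t : ℝ) :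
    2 * exp (2 * t) - exp (4 * t) + 4 * t ^ 2 * exp (2 * t) - 1 =
      -(4 * exp (2 * t) * (sinh t ^ 2 - t ^ 2)) := by
  have hexp_two : exp (2 * t) = exp t ^ 2 := by rw [← exp_nat_mul, Nat.cast_ofNat]
  have hexp_four : exp (4 * t) = exp (2 * t) ^ 2 := by
    rw [← exp_nat_mul, Nat.cast_ofNat, ← mul_assoc]; norm_num
  linear_combination
    (2 * exp t * sinh t + exp (2 * t) - 1) * two_mul_exp_mul_sinh t +
      4 * sinh t ^ 2 * hexp_two - hexp_four

lemma exp_mul_le_abs_determinant_expr {t₀ t : ℝ} (ht₀ : 0 ≤ t₀) (ht : t₀ ≤ |t|) :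
    4 * (exp (-(2 * t₀)) * (sinh t₀ ^ 2 - t₀ ^ 2)) * exp (2 * t + 2 * |t|) ≤
      |2 * exp (2 * t) - exp (4 * t) + 4 * t ^ 2 * exp (2 * t) - 1| :=
  calc 4 * (exp (-(2 * t₀)) * (sinh t₀ ^ 2 - t₀ ^ 2)) * exp (2 * t + 2 * |t|)
      = 4 * exp (2 * t) * (exp (2 * |t|) * (exp (-(2 * t₀)) * (sinh t₀ ^ 2 - t₀ ^ 2))) := by
        rw [exp_add]; ring
    _ ≤ 4 * exp (2 * t) * (sinh t ^ 2 - t ^ 2) :=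
        mul_le_mul_of_nonneg_left (exp_mul_le_sinh_sq_sub_sq ht₀ ht) (by positivity)
    _ ≤ |-(4 * exp (2 * t) * (sinh t ^ 2 - t ^ 2))| := by
        rw [abs_neg]; exact le_abs_self _
    _ = |2 * exp (2 * t) - exp (4 * t) + 4 * t ^ 2 * exp (2 * t) - 1| := by
        rw [determinant_expr_eq_neg_exp_mul_sinh_sq_sub_sq]

/-- Quantitative lower bounds for `f(t) = 2e^{2t} − e^{4t} + 4t²e^{2t} − 1`:
for every `t₀ > 0` there is `c > 0` with `|f(t)| ≥ c e^{4t}` for `t ≥ t₀` and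
`|f(t)| ≥ c` for `t ≤ −t₀`. -/
theorem determinant_function_lower_bounds
    (f : ℝ → ℝ)
    (hf : f = fun t => 2 * Real.exp (2 * t) - Real.exp (4 * t)
      + 4 * t ^ 2 * Real.exp (2 * t) - 1) :
    ∀ t₀ : ℝ, 0 < t₀ → ∃ c > 0,
      (∀ t : ℝ, t₀ ≤ t → c * Real.exp (4 * t) ≤ |f t|) ∧
      (∀ t : ℝ, t ≤ -t₀ → c ≤ |f t|) := by
  subst hf
  intro t₀ ht₀
  have hpos : 0 < exp (-(2 * t₀)) * (sinh t₀ ^ 2 - t₀ ^ 2) :=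
    mul_pos (exp_pos _) (sub_pos.2 (sq_lt_sinh_sq_iff.2 ht₀.ne'))
  refine ⟨4 * (exp (-(2 * t₀)) * (sinh t₀ ^ 2 - t₀ ^ 2)), mul_pos four_pos hpos,
    fun t ht => ?_, fun t ht => ?_⟩
  · have habs : |t| = t := abs_of_pos (ht₀.trans_le ht)
    have hexponent : 2 * t + 2 * |t| = 4 * t := by rw [habs]; ring
    simpa only [hexponent] using exp_mul_le_abs_determinant_expr ht₀.le (ht.trans_eq habs.symm)
  · have habs : |t| = -t := abs_of_neg (by linarith)
    have hexponent : 2 * t + 2 * |t| = 0 := by rw [habs]; ring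
    simpa only [hexponent, exp_zero, mul_one] using
      exp_mul_le_abs_determinant_expr ht₀.le ((le_neg_of_le_neg ht).trans_eq habs.symm)
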